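/- arXiv:1210.5263 — 2 statements merged into one kernel-verified Lean document; each statement's English description precedes it below -/
import Mathlib

section
/- Let p ∈ ℝ[x,y]. If the zero set Z(p) = {(a,b) ∈ ℝ² : p(a,b) = 0} is finite, then deg_x p and deg_y p are both even. -/
/-!
Regard `p` as a univariate polynomial in `X i` whose coefficients are polynomials in the other
variables. Wherever its leading coefficient does not vanish, specializing the other variables
yields a univariate polynomial of degree `degreeOf i p`; if this degree is odd, the specialization
has a root, that is, `p` has a zero above the chosen point. If some other coordinate `X j` omitted
infinitely many values on the zero set, the leading coefficient would vanish on a box with infinite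
sides and hence be zero. So `X j` takes all but finitely many values on the zero set, which is
therefore infinite.
-/

section OddDegree

open Polynomial

theorem exists_eval_mul_eval_neg_nonpos_of_odd_natDegree {𝕜 : Type*} [NormedField 𝕜]
    [LinearOrder 𝕜] [IsStrictOrderedRing 𝕜] [OrderTopology 𝕜] {f : 𝕜[X]} (hf : Odd f.natDegree) :
    ∃ a, f.eval a * f.eval (-a) ≤ 0 := by
  have leadingCoeff_comp_neg : (f.comp (-X)).leadingCoeff = -f.leadingCoeff := by
    rw [leadingCoeff_comp (by simp)]
    simp [hf.neg_one_pow]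
  have leadingCoeff_nonpos : (f * f.comp (-X)).leadingCoeff ≤ 0 := by
    rw [leadingCoeff_mul, leadingCoeff_comp_neg, mul_neg, neg_nonpos]
    exact mul_self_nonneg _
  have degree_pos : 0 < (f * f.comp (-X)).degree := by
    have hf₀ : f ≠ 0 := ne_zero_of_natDegree_gt hf.pos
    have hcomp₀ : f.comp (-X) ≠ 0 := by
      rwa [← leadingCoeff_ne_zero, leadingCoeff_comp_neg, neg_ne_zero, leadingCoeff_ne_zero]
    rw [← natDegree_pos_iff_degree_pos, natDegree_mul hf₀ hcomp₀]
    exact Nat.add_pos_left hf.pos _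
  obtain ⟨a, ha⟩ := ((tendsto_atBot_of_leadingCoeff_nonpos _ degree_pos
    leadingCoeff_nonpos).eventually_le_atBot 0).exists
  exact ⟨a, by simpa using ha⟩

theorem exists_isRoot_of_odd_natDegree_real {f : ℝ[X]} (hf : Odd f.natDegree) :
    ∃ x, f.IsRoot x := by
  obtain ⟨a, ha⟩ := exists_eval_mul_eval_neg_nonpos_of_odd_natDegree hf
  rcases mul_nonpos_iff.mp ha with ⟨h_nonneg, h_nonpos⟩ | ⟨h_nonpos, h_nonneg⟩ <;>
    exact mem_range_of_exists_le_of_exists_ge f.continuous ⟨_, h_nonpos⟩ ⟨_, h_nonneg⟩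

instance isRealClosed_real : IsRealClosed ℝ :=
  .of_linearOrderedField (fun hx ↦ ⟨_, (Real.mul_self_sqrt hx).symm⟩)
    exists_isRoot_of_odd_natDegree_real

end OddDegree

section UnivariateEquiv

open MvPolynomial

variable {σ R : Type*}

/-- The identification of `R[X_σ]` with `R[X_j : j ≠ i][X]`, which singles out the variable `X i`:
the polynomial variable on the right-hand side corresponds to `X i`. -/
noncomputable def univariateEquiv [DecidableEq σ] [CommSemiring R] (i : σ) :
    MvPolynomial σ R ≃ₐ[R] Polynomial (MvPolynomial {j // j ≠ i} R) :=
  (renameEquiv R (Equiv.optionSubtypeNe i).symm).trans (optionEquivLeft R {j // j ≠ i})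

theorem natDegree_univariateEquiv [DecidableEq σ] [CommSemiring R] (i : σ)
    (p : MvPolynomial σ R) : (univariateEquiv i p).natDegree = p.degreeOf i :=
  (degreeOf_eq_natDegree i p).symm

theorem eval_map_univariateEquiv [DecidableEq σ] [CommSemiring R] (i : σ)
    (p : MvPolynomial σ R) (s : {j // j ≠ i} → R) (a : R) :
    ((univariateEquiv i p).map (eval s)).eval a =
      eval (fun j ↦ if h : j = i then a else s ⟨j, h⟩) p := by
  have : (fun o : Option {j // j ≠ i} ↦ o.elim a s) ∘ (Equiv.optionSubtypeNe i).symm =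
      fun j ↦ if h : j = i then a else s ⟨j, h⟩ := by
    funext j
    by_cases h : j = i <;> simp [h]
  rw [← this, ← eval_rename, optionEquivLeft_elim_eval]
  rfl

theorem exists_eval_eq_zero_of_eval_leadingCoeff_ne_zero [DecidableEq σ] [CommSemiring R]
    {p : MvPolynomial σ R} {i : σ}
    (hroot : ∀ f : Polynomial R, f.natDegree = p.degreeOf i → ∃ a, f.IsRoot a)
    {s : {j // j ≠ i} → R} (hs : eval s (univariateEquiv i p).leadingCoeff ≠ 0) :
    ∃ x : σ → R, eval x p = 0 ∧ ∀ j : {j // j ≠ i}, x j = s j := by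
  obtain ⟨a, ha⟩ := hroot ((univariateEquiv i p).map (eval s)) <| by
    rw [Polynomial.natDegree_map_of_leadingCoeff_ne_zero _ hs, natDegree_univariateEquiv]
  rw [Polynomial.IsRoot.def, eval_map_univariateEquiv] at ha
  exact ⟨_, ha, fun j ↦ dif_neg j.2⟩

theorem finite_compl_image_apply_zeros [CommRing R] [IsDomain R] {p : MvPolynomial σ R} {i j : σ}
    (hji : j ≠ i) (hroot : ∀ f : Polynomial R, f.natDegree = p.degreeOf i → ∃ a, f.IsRoot a) :
    ((fun x : σ → R ↦ x j) '' {x | eval x p = 0})ᶜ.Finite := by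
  classical
  by_contra hinf
  have leadingCoeff_eq_zero : (univariateEquiv i p).leadingCoeff = 0 := by
    refine funext_set _ (fun _ ↦ hinf) fun s hs ↦ ?_
    rw [map_zero]
    by_contra hne
    obtain ⟨x, hx, hxs⟩ := exists_eval_eq_zero_of_eval_leadingCoeff_ne_zero hroot hne
    exact hs ⟨j, hji⟩ (Set.mem_univ _) ⟨x, hx, hxs ⟨j, hji⟩⟩
  have hp : p = 0 := by simpa using leadingCoeff_eq_zero
  obtain ⟨a, ha⟩ := hroot 1 (by simp [hp])
  simp at ha

end UnivariateEquiv

theorem stmt_2_general {σ R : Type*} [Nontrivial σ] [Field R] [IsRealClosed R]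
    (p : MvPolynomial σ R) (h : {x : σ → R | MvPolynomial.eval x p = 0}.Finite) (i : σ) :
    Even (p.degreeOf i) := by
  by_contra hodd
  rw [Nat.not_even_iff_odd] at hodd
  obtain ⟨j, hji⟩ := exists_ne i
  refine (h.image fun x ↦ x j).infinite_compl (finite_compl_image_apply_zeros hji fun f hf ↦ ?_)
  exact IsRealClosed.exists_isRoot_of_odd_natDegree (hf ▸ hodd)

theorem stmt_2 (p : MvPolynomial (Fin 2) ℝ)
    (h : ({ab : ℝ × ℝ | MvPolynomial.eval ![ab.1, ab.2] p = 0}).Finite) :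
    Even (p.degreeOf 0) ∧ Even (p.degreeOf 1) := by
  have hzeros : {x : Fin 2 → ℝ | MvPolynomial.eval x p = 0}.Finite := by
    have eta (x : Fin 2 → ℝ) : ![x 0, x 1] = x := (finTwoArrowEquiv ℝ).symm_apply_apply x
    simpa [eta] using h.preimage_embedding (finTwoArrowEquiv ℝ).toEmbedding
  exact ⟨stmt_2_general p hzeros 0, stmt_2_general p hzeros 1⟩
end

section
/- Let p, g ∈ ℝ[x,y] be two polynomials with the same zero set Z = Z(p) = Z(g), and let n = deg_y p. If the set of real numbers x₀ such that the vertical line x = x₀ intersects Z in at least n distinct points (i.e., the set {y ∈ ℝ : (x₀, y) ∈ Z} has at least n elements) is infinite, then there exists d ∈ ℝ[x,y] such that d divides p, d divides g, and Z(d) = Z. -/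
/-!
Let `d = gcd p g` in `R[x,y]`, with coprime cofactors `p = d p'` and `g = d g'`. Over the fraction
field of `R[x]` these generate the unit ideal, so some nonzero `r ∈ R[x]` lies in `(p', g')`, and
`p'`, `g'` have no common zero on all but finitely many vertical lines. On those lines `Z` is the
zero set of `d`, so `d` has at least `deg_y p` zeros on infinitely many lines. Hence
`deg_y d ≥ deg_y p`, which forces `p' = c(x)`. If `c(a) = 0`, the whole line `x = a` lies in `Z`,
so `x - a` divides `g = d g'`; being coprime to `p'`, the factor `g'` is not divisible by `x - a`,
so `d` is. Thus `d` already vanishes wherever `p'` does.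
-/

section FractionField

open Polynomial nonZeroDivisors

variable {A : Type*} [CommRing A]

lemma map_primPart_integerNormalization_dvd [NormalizedGCDMonoid A] (K : Type*) [Field K]
    [Algebra A K] [IsFractionRing A K] (f : K[X]) :
    (IsLocalization.integerNormalization A⁰ f).primPart.map (algebraMap A K) ∣ f := by
  obtain ⟨b, hb, hbf⟩ := IsLocalization.integerNormalization_spec A⁰ f
  have hb_unit : IsUnit (C (algebraMap A K b)) :=
    isUnit_C.2 (IsLocalization.map_units K (⟨b, hb⟩ : A⁰))
  rw [← algebraMap_smul K, smul_eq_C_mul] at hbf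
  rw [← hb_unit.dvd_mul_left, ← hbf]
  exact Polynomial.map_dvd _ (primPart_dvd _)

variable [IsDomain A]

lemma isCoprime_map_algebraMap_of_isRelPrime [IsGCDMonoid A] (K : Type*) [Field K] [Algebra A K]
    [IsFractionRing A K] {p q : A[X]} (hpq : IsRelPrime p q) :
    IsCoprime (p.map (algebraMap A K)) (q.map (algebraMap A K)) := by
  have := Classical.arbitrary (NormalizedGCDMonoid A)
  rw [← isRelPrime_iff_isCoprime]
  intro f hfp hfq
  have hf : f ≠ 0 := by
    rintro rfl
    rw [zero_dvd_iff, Polynomial.map_eq_zero_iff (IsFractionRing.injective A K)] at hfp hfq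
    subst hfp hfq
    exact not_isUnit_zero (hpq dvd_rfl dvd_rfl)
  have hN := map_primPart_integerNormalization_dvd (A := A) K f
  have hprim := (IsLocalization.integerNormalization A⁰ f).isPrimitive_primPart
  exact isUnit_or_eq_zero_of_isUnit_integerNormalization_primPart hf <|
    hpq (hprim.dvd_of_fraction_map_dvd_fraction_map (hN.trans hfp))
      (hprim.dvd_of_fraction_map_dvd_fraction_map (hN.trans hfq))

attribute [local instance] Polynomial.algebra Polynomial.isLocalization in
lemma exists_C_mem_span_pair_of_isRelPrime [IsGCDMonoid A] {p q : A[X]} (hpq : IsRelPrime p q) :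
    ∃ r ≠ 0, C r ∈ Ideal.span {p, q} := by
  let K := FractionRing A
  have htop : (Ideal.span {p, q}).map (algebraMap A[X] K[X]) = ⊤ := by
    rw [Ideal.map_span, Set.image_pair, Ideal.eq_top_iff_one, Ideal.mem_span_pair]
    exact isCoprime_map_algebraMap_of_isRelPrime K hpq
  have hmeet := mt (IsLocalization.map_algebraMap_ne_top_iff_disjoint (A⁰.map C) K[X] _).2
    (not_not.2 htop)
  obtain ⟨_, ⟨r, hr, rfl⟩, hmem⟩ := Set.not_disjoint_iff.1 hmeet
  exact ⟨r, nonZeroDivisors.ne_zero hr, hmem⟩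

end FractionField

section Bivariate

open Polynomial
open scoped Polynomial.Bivariate

variable {R : Type*} [CommRing R]

lemma C_X_sub_C_dvd_iff_map_evalRingHom_eq_zero {q : R[X][Y]} {a : R} :
    C (X - C a) ∣ q ↔ q.map (evalRingHom a) = 0 := by
  simp only [C_dvd_iff_dvd_coeff, dvd_iff_isRoot, IsRoot.def, Polynomial.ext_iff, coeff_map,
    coe_evalRingHom, coeff_zero]

variable [IsDomain R]

lemma C_X_sub_C_dvd_iff_forall_evalEval_eq_zero [Infinite R] {q : R[X][Y]} {a : R} :
    C (X - C a) ∣ q ↔ ∀ b, q.evalEval a b = 0 := by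
  simp only [C_X_sub_C_dvd_iff_map_evalRingHom_eq_zero, ← map_evalRingHom_eval]
  exact ⟨fun h b => by rw [h, eval_zero], zero_of_eval_zero _⟩

lemma finite_setOf_map_evalRingHom_eq_zero {q : R[X][Y]} (hq : q ≠ 0) :
    {a : R | q.map (evalRingHom a) = 0}.Finite := by
  refine (finite_setOfPred_isRoot (leadingCoeff_ne_zero.2 hq)).subset fun a ha => ?_
  simpa using congrArg (coeff · q.natDegree) ha

lemma encard_setOf_evalEval_eq_zero_le_natDegree {q : R[X][Y]} {a : R}
    (hq : q.map (evalRingHom a) ≠ 0) :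
    {b : R | q.evalEval a b = 0}.encard ≤ q.natDegree := by
  classical
  have hroots : {b : R | q.evalEval a b = 0} = (q.map (evalRingHom a)).roots.toFinset := by
    ext b
    simp [hq, ← map_evalRingHom_eval]
  rw [hroots, Set.encard_coe_eq_coe_finsetCard, Nat.cast_le]
  exact (Multiset.toFinset_card_le _).trans ((card_roots' _).trans natDegree_map_le)

lemma le_natDegree_of_infinite_setOf_le_encard {q : R[X][Y]} (hq : q ≠ 0) {n : ℕ}
    (hlines : {a : R | (n : ℕ∞) ≤ {b | q.evalEval a b = 0}.encard}.Infinite) :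
    n ≤ q.natDegree := by
  obtain ⟨a, hn, ha⟩ :=
    (hlines.sdiff (finite_setOf_map_evalRingHom_eq_zero hq)).nonempty
  exact Nat.cast_le.1 (hn.trans (encard_setOf_evalEval_eq_zero_le_natDegree ha))

lemma finite_setOf_exists_common_zero_of_isRelPrime [IsGCDMonoid R] {p q : R[X][Y]}
    (hpq : IsRelPrime p q) :
    {a : R | ∃ b, p.evalEval a b = 0 ∧ q.evalEval a b = 0}.Finite := by
  obtain ⟨r, hr, hmem⟩ := exists_C_mem_span_pair_of_isRelPrime hpq
  obtain ⟨u, v, huv⟩ := Ideal.mem_span_pair.1 hmem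
  refine (finite_setOfPred_isRoot hr).subset ?_
  rintro a ⟨b, hp, hq⟩
  have h := congrArg (evalEval a b) huv
  rw [evalEval_add, evalEval_mul, evalEval_mul, hp, hq, mul_zero, mul_zero, add_zero,
    evalEval_C] at h
  exact h.symm

lemma evalEval_eq_zero_of_isRelPrime_C [Infinite R] {c : R[X]} {d q : R[X][Y]}
    (hcq : IsRelPrime (C c) q) {a : R} (hc : c.eval a = 0)
    (hline : ∀ b, (d * q).evalEval a b = 0) (b : R) : d.evalEval a b = 0 := by
  have hprime : Prime (C (X - C a)) := prime_C_iff.2 (prime_X_sub_C a)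
  have hdvd_c : C (X - C a) ∣ C c := _root_.map_dvd C (dvd_iff_isRoot.2 hc)
  have hdvd_d : C (X - C a) ∣ d :=
    (hprime.dvd_or_dvd (C_X_sub_C_dvd_iff_forall_evalEval_eq_zero.2 hline)).resolve_right
      fun hdvd_q => hprime.not_isUnit (hcq hdvd_c hdvd_q)
  exact C_X_sub_C_dvd_iff_forall_evalEval_eq_zero.1 hdvd_d b

variable [IsGCDMonoid R] {d p q : R[X][Y]}

lemma natDegree_eq_zero_of_isRelPrime_cofactors (hpq : IsRelPrime p q) (hd : d ≠ 0)
    (hZ : ∀ a b, (d * p).evalEval a b = 0 ↔ (d * q).evalEval a b = 0)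
    (hlines : {a : R | ((d * p).natDegree : ℕ∞) ≤
      {b | (d * p).evalEval a b = 0}.encard}.Infinite) :
    p.natDegree = 0 := by
  obtain rfl | hp := eq_or_ne p 0
  · exact natDegree_zero
  have hdeg : (d * p).natDegree ≤ d.natDegree := by
    refine le_natDegree_of_infinite_setOf_le_encard hd
      ((hlines.sdiff (finite_setOf_exists_common_zero_of_isRelPrime hpq)).mono ?_)
    rintro a ⟨hn, ha⟩
    refine hn.trans (Set.encard_le_encard fun b hb => ?_)
    by_contra hdb
    have hzero {f : R[X][Y]} (hf : (d * f).evalEval a b = 0) : f.evalEval a b = 0 :=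
      (mul_eq_zero.1 ((evalEval_mul a b d f).symm.trans hf)).resolve_left hdb
    exact ha ⟨b, hzero hb, hzero ((hZ a b).1 hb)⟩
  rw [natDegree_mul hd hp] at hdeg
  lia

lemma evalEval_eq_zero_iff_of_isRelPrime_cofactors (hpq : IsRelPrime p q)
    (hZ : ∀ a b, (d * p).evalEval a b = 0 ↔ (d * q).evalEval a b = 0)
    (hlines : {a : R | ((d * p).natDegree : ℕ∞) ≤
      {b | (d * p).evalEval a b = 0}.encard}.Infinite) (a b : R) :
    d.evalEval a b = 0 ↔ (d * p).evalEval a b = 0 := by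
  obtain rfl | hd := eq_or_ne d 0
  · simp
  have : Infinite R := Set.infinite_univ_iff.1 (hlines.mono (Set.subset_univ _))
  obtain ⟨c, rfl⟩ : ∃ c, p = C c := ⟨_, eq_C_of_natDegree_eq_zero <|
    natDegree_eq_zero_of_isRelPrime_cofactors hpq hd hZ hlines⟩
  have hline (hc : c.eval a = 0) (y : R) : (d * q).evalEval a y = 0 := by
    rw [← hZ, evalEval_mul, evalEval_C, hc, mul_zero]
  rw [evalEval_mul, evalEval_C, mul_eq_zero, iff_self_or]
  exact fun hc => evalEval_eq_zero_of_isRelPrime_C hpq hc (hline hc) b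

lemma exists_gcd_forall_evalEval_eq_zero_iff
    (hZ : ∀ a b, p.evalEval a b = 0 ↔ q.evalEval a b = 0)
    (hlines : {a : R | (p.natDegree : ℕ∞) ≤ {b | p.evalEval a b = 0}.encard}.Infinite) :
    ∃ d : R[X][Y], (∀ e, e ∣ d ↔ e ∣ p ∧ e ∣ q) ∧
      ∀ a b, d.evalEval a b = 0 ↔ p.evalEval a b = 0 := by
  have := Classical.arbitrary (NormalizedGCDMonoid R[X][Y])
  obtain ⟨p', q', hp, hq, hunit⟩ := extract_gcd p q
  refine ⟨gcd p q, fun e => dvd_gcd_iff e p q, ?_⟩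
  generalize gcd p q = d at hp hq
  subst hp hq
  exact evalEval_eq_zero_iff_of_isRelPrime_cofactors (gcd_isUnit_iff_isRelPrime.1 hunit) hZ hlines

end Bivariate

section MvPolynomial

open Polynomial
open scoped Polynomial.Bivariate

variable {R : Type*} [CommSemiring R]

lemma eval_equivMvPolynomial (q : R[X][Y]) (a b : R) :
    MvPolynomial.eval ![a, b] (Bivariate.equivMvPolynomial R q) = q.evalEval a b := by
  have h : (MvPolynomial.aeval ![a, b]).comp (Bivariate.equivMvPolynomial R).toAlgHom =
      aevalAeval a b := by
    ext <;> simp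
  rw [← coe_aevalAeval_eq_evalEval, ← h]
  rfl

lemma equivMvPolynomial_symm_monomial (m : Fin 2 →₀ ℕ) (c : R) :
    (Bivariate.equivMvPolynomial R).symm (MvPolynomial.monomial m c) =
      C (C c * X ^ m 0) * X ^ m 1 := by
  simp [MvPolynomial.monomial_eq, Finsupp.prod_fintype, mul_assoc]

lemma natDegree_equivMvPolynomial_symm_le_degreeOf (p : MvPolynomial (Fin 2) R) :
    ((Bivariate.equivMvPolynomial R).symm p).natDegree ≤ p.degreeOf 1 := by
  conv_lhs => rw [p.as_sum, map_sum]
  refine natDegree_sum_le_of_forall_le _ _ fun m hm => ?_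
  rw [equivMvPolynomial_symm_monomial]
  exact (natDegree_C_mul_X_pow_le _ _).trans (MvPolynomial.monomial_le_degreeOf 1 hm)

end MvPolynomial

theorem stmt_4_general {R : Type*} [CommRing R] [IsDomain R] [IsGCDMonoid R]
    (p g : MvPolynomial (Fin 2) R) (Z : Set (R × R))
    (hZp : Z = {ab : R × R | MvPolynomial.eval ![ab.1, ab.2] p = 0})
    (hZg : Z = {ab : R × R | MvPolynomial.eval ![ab.1, ab.2] g = 0})
    (hlines : {x₀ : R | (p.degreeOf 1 : ℕ∞) ≤ {y : R | (x₀, y) ∈ Z}.encard}.Infinite) :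
    ∃ d : MvPolynomial (Fin 2) R, (∀ e, e ∣ d ↔ e ∣ p ∧ e ∣ g) ∧
      {ab : R × R | MvPolynomial.eval ![ab.1, ab.2] d = 0} = Z := by
  let φ := Polynomial.Bivariate.equivMvPolynomial R
  have hp (a b : R) : (a, b) ∈ Z ↔ (φ.symm p).evalEval a b = 0 := by
    rw [hZp, Set.mem_ofPred_eq, ← eval_equivMvPolynomial, φ.apply_symm_apply]
  have hg (a b : R) : (a, b) ∈ Z ↔ (φ.symm g).evalEval a b = 0 := by
    rw [hZg, Set.mem_ofPred_eq, ← eval_equivMvPolynomial, φ.apply_symm_apply]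
  have hlines_natDegree : {a : R | ((φ.symm p).natDegree : ℕ∞) ≤
      {b | (φ.symm p).evalEval a b = 0}.encard}.Infinite := by
    refine hlines.mono fun a ha => ?_
    simp only [hp, Set.mem_ofPred_eq] at ha ⊢
    exact (Nat.cast_le.2 (natDegree_equivMvPolynomial_symm_le_degreeOf p)).trans ha
  obtain ⟨d, hd, hZd⟩ :=
    exists_gcd_forall_evalEval_eq_zero_iff (fun a b => (hp a b).symm.trans (hg a b))
      hlines_natDegree
  refine ⟨φ d, fun e => ?_, ?_⟩
  · rw [← map_dvd_iff φ.symm, φ.symm_apply_apply, hd, map_dvd_iff, map_dvd_iff]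
  · ext ⟨a, b⟩
    rw [Set.mem_ofPred_eq, eval_equivMvPolynomial, hZd, hp]

theorem stmt_4 (p g : MvPolynomial (Fin 2) ℝ)
    (Z : Set (ℝ × ℝ))
    (hZp : Z = {ab : ℝ × ℝ | MvPolynomial.eval ![ab.1, ab.2] p = 0})
    (hZg : Z = {ab : ℝ × ℝ | MvPolynomial.eval ![ab.1, ab.2] g = 0})
    (hlines : {x₀ : ℝ | (p.degreeOf 1 : ℕ∞) ≤ {y : ℝ | (x₀, y) ∈ Z}.encard}.Infinite) :
    ∃ d : MvPolynomial (Fin 2) ℝ, d ∣ p ∧ d ∣ g ∧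
      {ab : ℝ × ℝ | MvPolynomial.eval ![ab.1, ab.2] d = 0} = Z := by
  obtain ⟨d, hd, hZd⟩ := stmt_4_general p g Z hZp hZg hlines
  exact ⟨d, ((hd d).1 dvd_rfl).1, ((hd d).1 dvd_rfl).2, hZd⟩
end
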